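/- Linear growth bound: Let u: ℝⁿ → ℝ be a smooth entire solution of the self-shrinker equation. Then there exists C₁ > 0, depending only on n and sup_{|x|≤2√n} |u|, such that sup_{|x|≤R} |u(x)| ≤ C₁ R for all R > 1. One may take C₁ = 2(sup_{|x|≤2√n} |u| + √(2n+1)). -/

import Mathlib

open Real MeasureTheory Metric Filter
open scoped RealInnerProductSpace ENNReal NNReal

noncomputable section

abbrev E (n : ℕ) : Type := EuclideanSpace ℝ (Fin n)

variable {n : ℕ}

/-- `√(1 + |Du|²)`, the area element of the graph of `u`. -/
def aEl (u : E n → ℝ) (x : E n) : ℝ := Real.sqrt (1 + ‖gradient u x‖ ^ 2)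

/-- The vector field `Du/√(1+|Du|²)`. -/
def Vfield (u : E n → ℝ) (x : E n) : E n := (aEl u x)⁻¹ • gradient u x

/-- `div (Du/√(1+|Du|²))`. -/
def divV (u : E n → ℝ) (x : E n) : ℝ :=
  ∑ i, fderiv ℝ (fun y => Vfield u y i) x (EuclideanSpace.single i 1)

/-- The self-shrinker equation for an entire graph. -/
def ShrinkerEq (u : E n → ℝ) : Prop :=
  ∀ x, divV u x = (⟪x, gradient u x⟫ - u x) / (2 * aEl u x)

/-- The mean curvature of the graph of `u` with respect to the upward unit normal. -/
def meanCurv (u : E n → ℝ) (x : E n) : ℝ := -divV u x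

/-- The position vector `X = (x, u x)` of a point of the graph. -/
def Pos (u : E n → ℝ) (x : E n) : E (n + 1) :=
  (WithLp.equiv 2 (Fin (n + 1) → ℝ)).symm (Fin.snoc ((WithLp.equiv 2 (Fin n → ℝ)) x) (u x))

/-- The upward unit normal `n = (-Du, 1)/√(1+|Du|²)` at the point of the graph over `x`. -/
def NmlAt (u : E n → ℝ) (x : E n) : E (n + 1) :=
  (WithLp.equiv 2 (Fin (n + 1) → ℝ)).symm
    (Fin.snoc (fun i => -(Vfield u x i)) ((aEl u x)⁻¹))

/-- Projection of `ℝ^{n+1}` onto the first `n` coordinates. -/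
def projE (p : E (n + 1)) : E n :=
  (WithLp.equiv 2 (Fin n → ℝ)).symm fun i => p i.castSucc

/-- The unit normal of the graph, extended to `ℝ^{n+1}` independently of the last coordinate. -/
def Nml (u : E n → ℝ) (p : E (n + 1)) : E (n + 1) := NmlAt u (projE p)

/-- The inverse induced metric `g^{ij} = δ_{ij} - u_i u_j/(1+|Du|²)` of the graph. -/
def ginv (u : E n → ℝ) (x : E n) (i j : Fin n) : ℝ :=
  (if i = j then 1 else 0) - gradient u x i * gradient u x j / (aEl u x) ^ 2

/-- The Hessian `u_{ij}` of `u`. -/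
def hess (u : E n → ℝ) (x : E n) (i j : Fin n) : ℝ :=
  fderiv ℝ (fun y => gradient u y j) x (EuclideanSpace.single i 1)

/-- `|A|²`, the squared norm of the second fundamental form of the graph of `u`:
`|A|² = g^{ik} g^{jl} h_{ij} h_{kl}` with `h_{ij} = u_{ij}/√(1+|Du|²)`. -/
def A2 (u : E n → ℝ) (x : E n) : ℝ :=
  (∑ i, ∑ j, ∑ k, ∑ l, ginv u x i k * ginv u x j l * hess u x i j * hess u x k l) /
    (aEl u x) ^ 2

/-- Coordinate components `g^{ij} ∂_j f` of the tangential gradient. -/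
def gradCoord (u f : E n → ℝ) (x : E n) (i : Fin n) : ℝ :=
  ∑ j, ginv u x i j * gradient f x j

/-- The tangential gradient `∇_Σ f` (for `f` defined on the base, pulled back to the graph),
as a vector in `ℝ^{n+1}`. -/
def gradSigma (u f : E n → ℝ) (x : E n) : E (n + 1) :=
  (WithLp.equiv 2 (Fin (n + 1) → ℝ)).symm
    (Fin.snoc (fun i => gradCoord u f x i) (∑ i, gradient u x i * gradCoord u f x i))

/-- The Laplace–Beltrami operator of the graph:
`Δ_Σ f = (1/√g) ∂_i (√g g^{ij} ∂_j f)`. -/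
def lapSigma (u f : E n → ℝ) (x : E n) : ℝ :=
  (aEl u x)⁻¹ *
    ∑ i, fderiv ℝ (fun y => aEl u y * gradCoord u f y i) x (EuclideanSpace.single i 1)

/-- The tangential gradient `∇_Σ η` of an ambient function `η : ℝ^{n+1} → ℝ` along the graph:
the ambient gradient minus its normal component. -/
def gradSigmaAmb (u : E n → ℝ) (η : E (n + 1) → ℝ) (x : E n) : E (n + 1) :=
  gradient η (Pos u x) - ⟪gradient η (Pos u x), NmlAt u x⟫ • NmlAt u x

/-- `Vol(Σ ∩ B_R)`: the area of the part of the graph inside the ball of radius `R`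
in `ℝ^{n+1}`, computed by the area formula. -/
def sVol (u : E n → ℝ) (R : ℝ) : ℝ := ∫ x in {x : E n | ‖Pos u x‖ ≤ R}, aEl u x

/-- `M_R = sup_{|x| ≤ R} |u|`. -/
def supBall (u : E n → ℝ) (R : ℝ) : ℝ := ⨆ x : Metric.closedBall (0 : E n) R, |u x.1|

end

/-!
Rescaling a shrinker `u` gives the mean curvature flow `λ • graph u`, run backwards as `λ` grows.
A round sphere of radius `ρ` around `P` shrinks under the same flow to squared radius
`ρ² - 2n (Λ² - λ²)` while the scale decreases from `Λ` to `λ`. If the sphere misses the graph at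
scale `Λ`, it never meets it: where the squared distance to `P` is smallest, the Hessian of that
distance has nonnegative trace along the graph, and the shrinker equation turns this into
`⟪X, X - P⟫ ≤ 2n`, which is exactly the comparison of speeds.

For the growth bound, centre the sphere on the vertical axis at a height above the graph over
`|y| ≤ r` at scale `Λ = √(R² + 1)`; over `|y| > r` the graph is too far sideways to meet it.
If `|u x|` were larger than this height, the scaling `λ ↦ λ • (λ⁻¹ x, u (λ⁻¹ x))` would carry a
point of the graph through the height of the centre, at distance `|x| ≤ R` from it, while the sphere
still has radius greater than `R`.
-/

section SecondOrderConditions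

theorem deriv_deriv_nonneg_of_isLocalMin {f : ℝ → ℝ} {a : ℝ} (hf : ContinuousAt f a)
    (hmin : IsLocalMin f a) : 0 ≤ deriv (deriv f) a := by
  by_contra! hneg
  have hmax : IsLocalMax f a := isLocalMax_of_deriv_deriv_neg hneg hmin.deriv_eq_zero hf
  have hconst : f =ᶠ[nhds a] fun _ => f a := by
    filter_upwards [hmin, hmax] with x hge hle using le_antisymm hle hge
  have hzero : deriv (deriv f) a = 0 := by
    rw [hconst.deriv.deriv_eq]
    simp
  exact hneg.ne hzero

theorem fderiv_fderiv_apply_self_nonneg_of_isLocalMin {F : Type*} [NormedAddCommGroup F]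
    [NormedSpace ℝ F] {f : F → ℝ} {a : F} (hf : ContDiffAt ℝ 2 f a) (hmin : IsLocalMin f a)
    (v : F) : 0 ≤ fderiv ℝ (fderiv ℝ f) a v v := by
  have hline : ∀ s : ℝ, HasDerivAt (fun s : ℝ => a + s • v) v s := fun s => by
    simpa using ((hasDerivAt_id s).smul_const v).const_add a
  have hline0 : Tendsto (fun s : ℝ => a + s • v) (nhds 0) (nhds a) := by
    simpa using (hline 0).continuousAt.tendsto
  have hderiv : deriv (fun s : ℝ => f (a + s • v)) =ᶠ[nhds 0]
      fun s => fderiv ℝ f (a + s • v) v := by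
    have hdiff : ∀ᶠ z in nhds a, DifferentiableAt ℝ f z :=
      (hf.eventually (by simp)).mono fun z hz => hz.differentiableAt two_ne_zero
    filter_upwards [hline0.eventually hdiff] with s hs
    exact (hs.hasFDerivAt.comp_hasDerivAt s (hline s)).deriv
  have hderiv2 : HasDerivAt (fun s : ℝ => fderiv ℝ f (a + s • v) v)
      (fderiv ℝ (fderiv ℝ f) a v v) 0 := by
    have hDf : HasFDerivAt (fderiv ℝ f) (fderiv ℝ (fderiv ℝ f) a) (a + (0 : ℝ) • v) := by
      rw [zero_smul, add_zero]
      exact ((hf.fderiv_right (m := 1) (by norm_num)).differentiableAt one_ne_zero).hasFDerivAt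
    have hcomp := hDf.comp_hasDerivAt (0 : ℝ) (hline 0)
    simpa using hcomp.clm_apply (hasDerivAt_const (0 : ℝ) v)
  have hminline : IsLocalMin (fun s : ℝ => f (a + s • v)) 0 := by
    filter_upwards [hline0.eventually hmin] with s hs
    simpa using hs
  have hcont : ContinuousAt (fun s : ℝ => f (a + s • v)) 0 :=
    ContinuousAt.comp (by simpa using hf.continuousAt) (hline 0).continuousAt
  have := deriv_deriv_nonneg_of_isLocalMin hcont hminline
  rwa [hderiv.deriv_eq, hderiv2.deriv] at this

end SecondOrderConditions

section InnerProductSpace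

variable {F : Type*} [NormedAddCommGroup F] [InnerProductSpace ℝ F]

theorem bilinForm_apply_self_le_sum_orthonormalBasis {ι : Type*} [Fintype ι]
    (b : OrthonormalBasis ι ℝ F) {B : LinearMap.BilinForm ℝ F} (hB : ∀ v, 0 ≤ B v v) {ν : F}
    (hν : ‖ν‖ ≤ 1) : B ν ν ≤ ∑ i, B (b i) (b i) := by
  have hleft : ∑ i, ⟪b i, ν⟫ * B (b i) ν = B ν ν := by
    conv_rhs => enter [1]; rw [← b.sum_repr' ν]
    simp [map_sum]
  have hright : ∑ i, ⟪b i, ν⟫ * B ν (b i) = B ν ν := by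
    conv_rhs => enter [2]; rw [← b.sum_repr' ν]
    simp [map_sum]
  have hsum : ∑ i, B (b i - ⟪b i, ν⟫ • ν) (b i - ⟪b i, ν⟫ • ν) =
      ∑ i, B (b i) (b i) - (2 - ‖ν‖ ^ 2) * B ν ν := by
    have hterm : ∀ i, B (b i - ⟪b i, ν⟫ • ν) (b i - ⟪b i, ν⟫ • ν) =
        B (b i) (b i) - ⟪b i, ν⟫ * B (b i) ν - ⟪b i, ν⟫ * B ν (b i)
          + ⟪b i, ν⟫ ^ 2 * B ν ν := fun i => by
      simp only [map_sub, map_smul, LinearMap.sub_apply, LinearMap.smul_apply, smul_eq_mul]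
      ring
    simp only [hterm, Finset.sum_add_distrib, Finset.sum_sub_distrib, hleft, hright,
      ← Finset.sum_mul, b.sum_sq_inner_right]
    ring
  have hnonneg : 0 ≤ ∑ i, B (b i) (b i) - (2 - ‖ν‖ ^ 2) * B ν ν :=
    hsum ▸ Finset.sum_nonneg fun i _ => hB _
  have hle : 1 * B ν ν ≤ (2 - ‖ν‖ ^ 2) * B ν ν := by
    gcongr
    · exact hB ν
    · linarith [pow_le_one₀ (n := 2) (norm_nonneg ν) hν]
  linarith

theorem le_inner_smul_sub_of_isMinOn_Icc {X P : F} {c s Λ : ℝ} (hs : s < Λ)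
    (hmin : IsMinOn (fun t : ℝ => ‖t • X - P‖ ^ 2 - c * t ^ 2) (Set.Icc s Λ) s) :
    c * s ≤ ⟪X, s • X - P⟫ := by
  have hderiv : HasDerivAt (fun t : ℝ => ‖t • X - P‖ ^ 2 - c * t ^ 2)
      (2 * (⟪X, s • X - P⟫ - c * s)) s := by
    have hpos : HasDerivAt (fun t : ℝ => t • X - P) X s := by
      simpa using ((hasDerivAt_id s).smul_const X).sub_const P
    refine (hpos.norm_sq.sub ((hasDerivAt_pow 2 s).const_mul c)).congr_deriv ?_
    rw [real_inner_comm]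
    push_cast
    ring
  have hcone : Λ - s ∈ posTangentConeAt (Set.Icc s Λ) s :=
    mem_posTangentConeAt_of_segment_subset (by simp [segment_eq_Icc hs.le])
  have hnonneg :=
    hmin.localize.hasFDerivWithinAt_nonneg hderiv.hasFDerivAt.hasFDerivWithinAt hcone
  have : 0 ≤ (Λ - s) * (2 * (⟪X, s • X - P⟫ - c * s)) := by simpa using hnonneg
  linarith [nonneg_of_mul_nonneg_right this (sub_pos.2 hs)]

end InnerProductSpace

section Graph

variable {n : ℕ}

theorem sum_mul_apply_single (φ : E n →ₗ[ℝ] ℝ) (v : E n) :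
    ∑ i, v i * φ (EuclideanSpace.single i 1) = φ v := by
  conv_rhs => rw [← (EuclideanSpace.basisFun (Fin n) ℝ).sum_repr v]
  simp [map_sum]

theorem inner_eq_inner_projE_add (P Q : E (n + 1)) :
    ⟪P, Q⟫ = ⟪projE P, projE Q⟫ + P (Fin.last n) * Q (Fin.last n) := by
  simp [PiLp.inner_apply, Fin.sum_univ_castSucc, projE, mul_comm]

theorem norm_sq_eq_norm_sq_projE_add (P : E (n + 1)) :
    ‖P‖ ^ 2 = ‖projE P‖ ^ 2 + P (Fin.last n) ^ 2 := by
  rw [← real_inner_self_eq_norm_sq, ← real_inner_self_eq_norm_sq, inner_eq_inner_projE_add, sq]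

theorem projE_sub (P Q : E (n + 1)) : projE (P - Q) = projE P - projE Q := rfl

theorem projE_smul (c : ℝ) (P : E (n + 1)) : projE (c • P) = c • projE P := rfl

variable (u : E n → ℝ) (x : E n)

theorem projE_Pos : projE (Pos u x) = x := by
  ext i
  simp [projE, Pos]

theorem Pos_last : Pos u x (Fin.last n) = u x := by
  simp [Pos]

theorem inner_Pos (P : E (n + 1)) : ⟪Pos u x, P⟫ = ⟪x, projE P⟫ + u x * P (Fin.last n) := by
  rw [inner_eq_inner_projE_add, projE_Pos, Pos_last]

theorem norm_sq_Pos_sub (P : E (n + 1)) :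
    ‖Pos u x - P‖ ^ 2 = ‖x - projE P‖ ^ 2 + (u x - P (Fin.last n)) ^ 2 := by
  rw [norm_sq_eq_norm_sq_projE_add, projE_sub, projE_Pos, PiLp.sub_apply, Pos_last]

theorem norm_sq_smul_Pos_sub_Pos_zero (l k : ℝ) :
    ‖l • Pos u x - Pos (fun _ => k) 0‖ ^ 2 = (l * ‖x‖) ^ 2 + (l * u x - k) ^ 2 := by
  rw [norm_sq_eq_norm_sq_projE_add, projE_sub, projE_smul, projE_Pos, projE_Pos, sub_zero,
    PiLp.sub_apply, PiLp.smul_apply, Pos_last, Pos_last, smul_eq_mul, norm_smul, mul_pow, mul_pow,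
    Real.norm_eq_abs, sq_abs]

theorem norm_le_norm_Pos : ‖x‖ ≤ ‖Pos u x‖ := by
  refine le_of_sq_le_sq ?_ (norm_nonneg _)
  rw [norm_sq_eq_norm_sq_projE_add, projE_Pos]
  linarith [sq_nonneg (Pos u x (Fin.last n))]

theorem continuous_Pos {u : E n → ℝ} (hu : Continuous u) : Continuous (Pos u) :=
  (PiLp.continuous_toLp 2 _).comp
    (Continuous.finSnoc (A := fun _ : Fin (n + 1) => ℝ) (PiLp.continuous_ofLp 2 _) hu)

theorem gradient_apply_eq_fderiv (i : Fin n) :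
    gradient u x i = fderiv ℝ u x (EuclideanSpace.single i 1) := by
  rw [← inner_gradient_left, EuclideanSpace.inner_single_right]
  simp

theorem aEl_sq : aEl u x ^ 2 = 1 + ‖gradient u x‖ ^ 2 :=
  Real.sq_sqrt (by positivity)

theorem aEl_pos : 0 < aEl u x :=
  Real.sqrt_pos.2 (by positivity)

end Graph

section MinimalSurfaceOperator

variable {n : ℕ}

/-- The trace `g^{ij} B_{ij}` of a bilinear form on the base with respect to the metric induced
on the graph of `u`. -/
noncomputable def graphTrace (u : E n → ℝ) (x : E n) (B : LinearMap.BilinForm ℝ (E n)) : ℝ :=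
  ∑ i, ∑ j, ginv u x i j * B (EuclideanSpace.single i 1) (EuclideanSpace.single j 1)

/-- The metric `g_{ij} = δ_{ij} + u_i u_j` induced on the graph of `u`, as a bilinear form on the
base. -/
noncomputable def inducedMetric (u : E n → ℝ) (x : E n) : LinearMap.BilinForm ℝ (E n) :=
  innerₗ (E n) + LinearMap.BilinForm.linMulLin (fderiv ℝ u x) (fderiv ℝ u x)

theorem inducedMetric_apply (u : E n → ℝ) (x v w : E n) :
    inducedMetric u x v w = ⟪v, w⟫ + fderiv ℝ u x v * fderiv ℝ u x w := rfl

theorem graphTrace_add (u : E n → ℝ) (x : E n) (B B' : LinearMap.BilinForm ℝ (E n)) :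
    graphTrace u x (B + B') = graphTrace u x B + graphTrace u x B' := by
  simp [graphTrace, mul_add, Finset.sum_add_distrib]

theorem graphTrace_smul (u : E n → ℝ) (x : E n) (c : ℝ) (B : LinearMap.BilinForm ℝ (E n)) :
    graphTrace u x (c • B) = c * graphTrace u x B := by
  simp [graphTrace, Finset.mul_sum, mul_left_comm]

theorem graphTrace_eq_sub (u : E n → ℝ) (x : E n) (B : LinearMap.BilinForm ℝ (E n)) :
    graphTrace u x B = ∑ i, B (EuclideanSpace.single i 1) (EuclideanSpace.single i 1)
      - B (gradient u x) (gradient u x) / aEl u x ^ 2 := by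
  have hgrad : ∑ i, ∑ j, gradient u x i * gradient u x j *
      B (EuclideanSpace.single i 1) (EuclideanSpace.single j 1) =
        B (gradient u x) (gradient u x) := by
    simp only [mul_assoc, ← Finset.mul_sum, sum_mul_apply_single]
    exact sum_mul_apply_single (B.flip (gradient u x)) (gradient u x)
  rw [← hgrad]
  simp [graphTrace, ginv, sub_mul, Finset.sum_sub_distrib, Finset.sum_div, div_mul_eq_mul_div]

theorem graphTrace_nonneg (u : E n → ℝ) (x : E n) {B : LinearMap.BilinForm ℝ (E n)}
    (hB : ∀ v, 0 ≤ B v v) : 0 ≤ graphTrace u x B := by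
  have hW := aEl_pos u x
  have hν : ‖(aEl u x)⁻¹ • gradient u x‖ ≤ 1 := by
    rw [norm_smul, norm_inv, Real.norm_of_nonneg hW.le, inv_mul_le_one₀ hW]
    exact Real.le_sqrt_of_sq_le (by linarith)
  have hle := bilinForm_apply_self_le_sum_orthonormalBasis
    (EuclideanSpace.basisFun (Fin n) ℝ) hB hν
  simp only [map_smul, LinearMap.smul_apply, smul_eq_mul, EuclideanSpace.basisFun_apply] at hle
  rw [graphTrace_eq_sub, sub_nonneg]
  convert hle using 1
  field_simp

theorem graphTrace_inducedMetric (u : E n → ℝ) (x : E n) :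
    graphTrace u x (inducedMetric u x) = n := by
  have hW := aEl_pos u x
  have hsingle : ∀ i : Fin n, ⟪EuclideanSpace.single i (1 : ℝ), EuclideanSpace.single i 1⟫ = 1 :=
    fun i => by simp
  simp only [graphTrace_eq_sub, inducedMetric_apply, ← gradient_apply_eq_fderiv,
    ← inner_gradient_left (f := u) (y := gradient u x), real_inner_self_eq_norm_sq,
    Finset.sum_add_distrib, hsingle, ← sq, ← EuclideanSpace.real_norm_sq_eq]
  field_simp
  rw [aEl_sq]
  simp only [Finset.sum_const, Finset.card_univ, Fintype.card_fin, nsmul_eq_mul, mul_one]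
  ring

variable {u : E n → ℝ} {x : E n}

theorem hasFDerivAt_gradient_apply (hu : DifferentiableAt ℝ (fderiv ℝ u) x) (i : Fin n) :
    HasFDerivAt (fun y => gradient u y i)
      ((fderiv ℝ (fderiv ℝ u) x).flip (EuclideanSpace.single i 1)) x := by
  simp only [gradient_apply_eq_fderiv]
  refine (hu.hasFDerivAt.clm_apply
    (hasFDerivAt_const (EuclideanSpace.single i (1 : ℝ)) x)).congr_fderiv ?_
  ext v
  simp

theorem hasFDerivAt_aEl (hu : DifferentiableAt ℝ (fderiv ℝ u) x) :
    HasFDerivAt (aEl u) ((aEl u x)⁻¹ • (fderiv ℝ (fderiv ℝ u) x).flip (gradient u x)) x := by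
  have hsq : HasFDerivAt (fun y => 1 + ‖gradient u y‖ ^ 2)
      ((2 : ℝ) • (fderiv ℝ (fderiv ℝ u) x).flip (gradient u x)) x := by
    simp only [EuclideanSpace.real_norm_sq_eq]
    refine ((HasFDerivAt.fun_sum fun j _ =>
      (hasFDerivAt_gradient_apply hu j).pow 2).const_add 1).congr_fderiv ?_
    ext v
    have hv : ∑ j, gradient u x j * fderiv ℝ (fderiv ℝ u) x v (EuclideanSpace.single j 1) =
        fderiv ℝ (fderiv ℝ u) x v (gradient u x) :=
      sum_mul_apply_single (fderiv ℝ (fderiv ℝ u) x v).toLinearMap (gradient u x)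
    rw [smul_apply, ContinuousLinearMap.flip_apply, ← hv]
    simp [Finset.mul_sum, mul_assoc]
  have hW : (1 + ‖gradient u x‖ ^ 2 : ℝ) ≠ 0 := by positivity
  refine (hsq.sqrt hW).congr_fderiv ?_
  rw [smul_smul]
  congr 1
  change 1 / (2 * aEl u x) * 2 = _
  field_simp

theorem hasFDerivAt_Vfield_apply (hu : DifferentiableAt ℝ (fderiv ℝ u) x) (i : Fin n) :
    HasFDerivAt (fun y => Vfield u y i)
      ((aEl u x)⁻¹ • ((fderiv ℝ (fderiv ℝ u) x).flip (EuclideanSpace.single i 1)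
        - (gradient u x i / aEl u x ^ 2) • (fderiv ℝ (fderiv ℝ u) x).flip (gradient u x))) x := by
  have hW := aEl_pos u x
  have hinv := (hasDerivAt_inv hW.ne').comp_hasFDerivAt x (hasFDerivAt_aEl hu)
  refine (hinv.mul (hasFDerivAt_gradient_apply hu i)).congr_fderiv ?_
  ext v
  simp only [Function.comp_apply, neg_smul, smul_neg, add_apply, smul_apply,
    ContinuousLinearMap.flip_apply, smul_eq_mul, neg_apply, sub_apply]
  field_simp
  ring

theorem aEl_mul_divV (hu : DifferentiableAt ℝ (fderiv ℝ u) x) :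
    aEl u x * divV u x = graphTrace u x (fderiv ℝ (fderiv ℝ u) x).toBilinForm := by
  have hW := aEl_pos u x
  have hgrad : ∑ i, gradient u x i *
      fderiv ℝ (fderiv ℝ u) x (EuclideanSpace.single i 1) (gradient u x) =
        fderiv ℝ (fderiv ℝ u) x (gradient u x) (gradient u x) :=
    sum_mul_apply_single ((fderiv ℝ (fderiv ℝ u) x).flip (gradient u x)).toLinearMap _
  have hderiv (i : Fin n) := (hasFDerivAt_Vfield_apply hu i).fderiv
  simp only [graphTrace_eq_sub, ContinuousLinearMap.toBilinForm_apply, ← hgrad, divV, hderiv,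
    smul_apply, sub_apply, ContinuousLinearMap.flip_apply, smul_eq_mul, ← Finset.mul_sum,
    Finset.sum_sub_distrib, div_mul_eq_mul_div, ← Finset.sum_div]
  field_simp

end MinimalSurfaceOperator

section SquaredDistance

variable {n : ℕ} {u : E n → ℝ} {x : E n}

theorem contDiffAt_norm_sq_Pos_sub {m : WithTop ℕ∞} (hu : ContDiffAt ℝ m u x) (P : E (n + 1)) :
    ContDiffAt ℝ m (fun y => ‖Pos u y - P‖ ^ 2) x := by
  simp only [norm_sq_Pos_sub]
  exact ((contDiffAt_id.sub contDiffAt_const).norm_sq ℝ).add ((hu.sub contDiffAt_const).pow 2)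

theorem fderiv_norm_sq_Pos_sub_apply (hu : DifferentiableAt ℝ u x) (P : E (n + 1)) (v : E n) :
    fderiv ℝ (fun y => ‖Pos u y - P‖ ^ 2) x v =
      2 * (⟪x - projE P, v⟫ + (u x - P (Fin.last n)) * fderiv ℝ u x v) := by
  have hhor := ((hasFDerivAt_id x).sub_const (projE P)).norm_sq
  have hvert := (hu.hasFDerivAt.sub_const (P (Fin.last n))).pow 2
  have hsum : HasFDerivAt (fun y => ‖Pos u y - P‖ ^ 2) _ x :=
    (hhor.add hvert).congr_of_eventuallyEq (.of_forall fun y => norm_sq_Pos_sub u y P)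
  rw [hsum.fderiv]
  simp only [id_eq, map_sub, ContinuousLinearMap.comp_id, Nat.add_one_sub_one, pow_one,
    nsmul_eq_mul, Nat.cast_ofNat, add_apply, smul_apply, sub_apply, coe_innerSL_apply, smul_eq_mul,
    inner_sub_left]
  ring

theorem fderiv_fderiv_norm_sq_Pos_sub_apply_self (hu : ContDiffAt ℝ 2 u x) (P : E (n + 1))
    (v : E n) :
    fderiv ℝ (fderiv ℝ fun y => ‖Pos u y - P‖ ^ 2) x v v =
      2 * (inducedMetric u x v v + (u x - P (Fin.last n)) * fderiv ℝ (fderiv ℝ u) x v v) := by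
  have hDdiff : ∀ {f : E n → ℝ}, ContDiffAt ℝ 2 f x →
      HasFDerivAt (fun y => fderiv ℝ f y v) ((fderiv ℝ (fderiv ℝ f) x).flip v) x := fun hf =>
    (((hf.fderiv_right (m := 1) (by norm_num)).differentiableAt one_ne_zero).hasFDerivAt.clm_apply
      (hasFDerivAt_const v x)).congr_fderiv (by ext w; simp)
  have hfirst : (fun y => fderiv ℝ (fun y => ‖Pos u y - P‖ ^ 2) y v) =ᶠ[nhds x]
      fun y => 2 * (⟪y - projE P, v⟫ + (u y - P (Fin.last n)) * fderiv ℝ u y v) :=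
    (hu.eventually (by simp)).mono fun y hy =>
      fderiv_norm_sq_Pos_sub_apply (hy.differentiableAt two_ne_zero) P v
  have hhor := ((hasFDerivAt_id x).sub_const (projE P)).inner ℝ (hasFDerivAt_const v x)
  have hvert := ((hu.differentiableAt two_ne_zero).hasFDerivAt.sub_const (P (Fin.last n))).mul
    (hDdiff hu)
  have huniq := (hDdiff (contDiffAt_norm_sq_Pos_sub hu P)).unique
    (((hhor.add hvert).const_mul 2).congr_of_eventuallyEq hfirst)
  have hv := DFunLike.congr_fun huniq v
  rw [ContinuousLinearMap.flip_apply] at hv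
  rw [hv, inducedMetric_apply]
  simp only [id_eq, smul_add, add_apply, smul_apply, ContinuousLinearMap.comp_apply,
    ContinuousLinearMap.prod_apply, ContinuousLinearMap.id_apply, zero_apply, fderivInnerCLM_apply,
    inner_zero_right, real_inner_self_eq_norm_sq, zero_add, smul_eq_mul,
    ContinuousLinearMap.flip_apply]
  ring

end SquaredDistance

section Shrinker

variable {n : ℕ} {u : E n → ℝ}

theorem ShrinkerEq.graphTrace_fderiv_fderiv (hshr : ShrinkerEq u) {x : E n}
    (hu : DifferentiableAt ℝ (fderiv ℝ u) x) :
    graphTrace u x (fderiv ℝ (fderiv ℝ u) x).toBilinForm = (fderiv ℝ u x x - u x) / 2 := by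
  have hW := aEl_pos u x
  rw [← aEl_mul_divV hu, hshr x, real_inner_comm, inner_gradient_left]
  field_simp

theorem ShrinkerEq.inner_Pos_sub_le_of_isLocalMin (hshr : ShrinkerEq u) {P : E (n + 1)} {x : E n}
    (hu : ContDiffAt ℝ 2 u x) (hmin : IsLocalMin (fun y => ‖Pos u y - P‖ ^ 2) x) :
    ⟪Pos u x, Pos u x - P⟫ ≤ 2 * n := by
  have hfirst : ⟪x - projE P, x⟫ + (u x - P (Fin.last n)) * fderiv ℝ u x x = 0 := by
    have hcrit := fderiv_norm_sq_Pos_sub_apply (hu.differentiableAt two_ne_zero) P x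
    rw [hmin.fderiv_eq_zero, zero_apply] at hcrit
    linarith
  have hsecond : 0 ≤ graphTrace u x (inducedMetric u x
      + (u x - P (Fin.last n)) • (fderiv ℝ (fderiv ℝ u) x).toBilinForm) := by
    refine graphTrace_nonneg u x fun v => ?_
    have hv := fderiv_fderiv_apply_self_nonneg_of_isLocalMin
      (contDiffAt_norm_sq_Pos_sub hu P) hmin v
    rw [fderiv_fderiv_norm_sq_Pos_sub_apply_self hu] at hv
    simpa using hv
  have hDu := (hu.fderiv_right (m := 1) (by norm_num)).differentiableAt one_ne_zero
  rw [graphTrace_add, graphTrace_smul, graphTrace_inducedMetric,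
    hshr.graphTrace_fderiv_fderiv hDu] at hsecond
  rw [inner_Pos, projE_sub, projE_Pos, PiLp.sub_apply, Pos_last, real_inner_comm]
  linarith

theorem ShrinkerEq.inner_Pos_smul_sub_le_of_isLocalMin (hshr : ShrinkerEq u) {P : E (n + 1)}
    {x : E n} {s : ℝ} (hs : 0 < s) (hu : ContDiffAt ℝ 2 u x)
    (hmin : IsLocalMin (fun y => ‖s • Pos u y - P‖ ^ 2) x) :
    ⟪Pos u x, s • Pos u x - P⟫ ≤ 2 * n * s := by
  have hfactor : ∀ y, s • Pos u y - P = s • (Pos u y - s⁻¹ • P) := fun y => by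
    rw [smul_sub, smul_inv_smul₀ hs.ne']
  have hmin' : IsLocalMin (fun y => ‖Pos u y - s⁻¹ • P‖ ^ 2) x := by
    filter_upwards [hmin] with y hy
    simp only [hfactor, norm_smul, mul_pow] at hy
    exact le_of_mul_le_mul_left hy (pow_pos (norm_pos_iff.2 hs.ne') 2)
  rw [hfactor, inner_smul_right, mul_comm]
  exact mul_le_mul_of_nonneg_right (hshr.inner_Pos_sub_le_of_isLocalMin hu hmin') hs.le

theorem exists_forall_norm_sq_smul_Pos_sub_le (hu : Continuous u) (P : E (n + 1)) (c : ℝ)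
    {l Λ : ℝ} (hl : 0 < l) (hlΛ : l ≤ Λ) :
    ∃ z, ∃ s ∈ Set.Icc l Λ, ∀ y, ∀ t ∈ Set.Icc l Λ,
      ‖s • Pos u z - P‖ ^ 2 - c * s ^ 2 ≤ ‖t • Pos u y - P‖ ^ 2 - c * t ^ 2 := by
  set G : E n × ℝ → ℝ := fun q => ‖q.2 • Pos u q.1 - P‖ ^ 2 - c * q.2 ^ 2 with hG
  have hcont : Continuous G := by
    have := continuous_Pos hu
    fun_prop
  set a := G (0, l) + |c| * Λ ^ 2
  have hcoercive : ∀ z : E n, ∀ s ∈ Set.Icc l Λ, G (z, s) ≤ G (0, l) →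
      ‖z‖ ≤ (√a + ‖P‖) / l := by
    intro z s hs hle
    have hs0 : 0 ≤ s := hl.le.trans hs.1
    have hsΛ : c * s ^ 2 ≤ |c| * Λ ^ 2 := by
      gcongr
      exacts [le_abs_self c, hs.2]
    have hdist : ‖s • Pos u z - P‖ ≤ √a := by
      refine Real.le_sqrt_of_sq_le ?_
      simp only [hG] at hle
      linarith
    rw [le_div_iff₀' hl]
    calc l * ‖z‖ ≤ s * ‖Pos u z‖ :=
          mul_le_mul hs.1 (norm_le_norm_Pos u z) (norm_nonneg z) hs0
      _ = ‖s • Pos u z‖ := by rw [norm_smul, Real.norm_of_nonneg hs0]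
      _ ≤ ‖s • Pos u z - P‖ + ‖P‖ := norm_le_norm_sub_add _ _
      _ ≤ √a + ‖P‖ := by gcongr
  have hK : IsCompact (closedBall (0 : E n) ((√a + ‖P‖) / l) ×ˢ Set.Icc l Λ) :=
    (isCompact_closedBall _ _).prod isCompact_Icc
  have hfar : ∀ᶠ q in cocompact (E n × ℝ) ⊓ 𝓟 (Set.univ ×ˢ Set.Icc l Λ), G (0, l) ≤ G q := by
    filter_upwards [mem_inf_of_left hK.compl_mem_cocompact,
      mem_inf_of_right (mem_principal_self _)] with ⟨z, s⟩ hout hmem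
    by_contra! hlt
    exact hout ⟨by simpa using hcoercive z s hmem.2 hlt.le, hmem.2⟩
  obtain ⟨⟨z, s⟩, hzs, hmin⟩ := hcont.continuousOn.exists_isMinOn'
    (isClosed_univ.prod isClosed_Icc) (x₀ := (0, l)) ⟨trivial, le_rfl, hlΛ⟩ hfar
  exact ⟨z, s, hzs.2, fun y t ht => isMinOn_iff.1 hmin (y, t) ⟨trivial, ht⟩⟩

-- At a first contact the graph would have to recede at least as fast as the sphere shrinks:
-- `2 m s ≤ 2 n s`.
theorem ShrinkerEq.sphere_avoidance_of_lt (hshr : ShrinkerEq u) (hu : ContDiff ℝ 2 u)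
    {P : E (n + 1)} {ρ m l Λ : ℝ} (hm : (n : ℝ) < m) (hl : 0 < l) (hlΛ : l ≤ Λ)
    (hΛ : ∀ y, ρ ^ 2 ≤ ‖Λ • Pos u y - P‖ ^ 2) (x : E n) :
    ρ ^ 2 - 2 * m * (Λ ^ 2 - l ^ 2) ≤ ‖l • Pos u x - P‖ ^ 2 := by
  obtain ⟨z, s, hs, hmin⟩ :=
    exists_forall_norm_sq_smul_Pos_sub_le hu.continuous P (2 * m) hl hlΛ
  have hs0 : 0 < s := hl.trans_le hs.1
  have hspace : IsLocalMin (fun y => ‖s • Pos u y - P‖ ^ 2) z :=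
    .of_forall fun y => by linarith [hmin y s hs]
  have hspeed := hshr.inner_Pos_smul_sub_le_of_isLocalMin hs0 hu.contDiffAt hspace
  have hsΛ : s = Λ := by
    by_contra hne
    have htime : IsMinOn (fun t : ℝ => ‖t • Pos u z - P‖ ^ 2 - 2 * m * t ^ 2) (Set.Icc s Λ) s :=
      fun t ht => hmin z t ⟨hs.1.trans ht.1, ht.2⟩
    have hfast := le_inner_smul_sub_of_isMinOn_Icc (hs.2.lt_of_ne hne) htime
    have := le_of_mul_le_mul_right (hfast.trans hspeed) hs0
    linarith
  have hle := hmin x l ⟨le_rfl, hlΛ⟩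
  rw [hsΛ] at hle
  linarith [hΛ z]

theorem ShrinkerEq.sphere_avoidance (hshr : ShrinkerEq u) (hu : ContDiff ℝ 2 u)
    {P : E (n + 1)} {ρ l Λ : ℝ} (hl : 0 < l) (hlΛ : l ≤ Λ)
    (hΛ : ∀ y, ρ ^ 2 ≤ ‖Λ • Pos u y - P‖ ^ 2) (x : E n) :
    ρ ^ 2 - 2 * n * (Λ ^ 2 - l ^ 2) ≤ ‖l • Pos u x - P‖ ^ 2 := by
  have hlim : Tendsto (fun m : ℝ => ρ ^ 2 - 2 * m * (Λ ^ 2 - l ^ 2)) (nhdsWithin n (Set.Ioi n))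
      (nhds (ρ ^ 2 - 2 * n * (Λ ^ 2 - l ^ 2))) :=
    (Continuous.tendsto (by fun_prop) _).mono_left nhdsWithin_le_nhds
  exact le_of_tendsto hlim (eventually_mem_nhdsWithin.mono fun m hm =>
    hshr.sphere_avoidance_of_lt hu hm hl hlΛ hΛ x)

end Shrinker

section GrowthBound

variable {n : ℕ} {u : E n → ℝ}

theorem abs_le_supBall (hu : Continuous u) {r : ℝ} {x : E n} (hx : ‖x‖ ≤ r) :
    |u x| ≤ supBall u r := by
  have hbdd : BddAbove (Set.range fun z : Metric.closedBall (0 : E n) r => |u z.1|) := by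
    have := (isCompact_closedBall (0 : E n) r).bddAbove_image hu.abs.continuousOn
    rwa [Set.image_eq_range] at this
  exact le_ciSup hbdd ⟨x, by simpa using hx⟩

theorem supBall_nonneg (u : E n → ℝ) (r : ℝ) : 0 ≤ supBall u r :=
  Real.iSup_nonneg fun _ => abs_nonneg _

theorem exists_abs_mul_apply_inv_smul_eq (hu : Continuous u) {Λ h : ℝ} {x : E n} (hΛ : 1 ≤ Λ)
    (h_start : Λ * |u (Λ⁻¹ • x)| ≤ h) (h_end : h ≤ |u x|) :
    ∃ l ∈ Set.Icc 1 Λ, |l * u (l⁻¹ • x)| = h := by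
  have hcont : ContinuousOn (fun l : ℝ => |l * u (l⁻¹ • x)|) (Set.Icc 1 Λ) := by
    have hinv : ContinuousOn (fun l : ℝ => l⁻¹) (Set.Icc 1 Λ) :=
      continuousOn_inv₀.mono fun l hl => (zero_lt_one.trans_le hl.1).ne'
    exact (continuousOn_id.mul (hu.comp_continuousOn (hinv.smul continuousOn_const))).abs
  refine intermediate_value_Icc' hΛ hcont ⟨?_, by simpa using h_end⟩
  rwa [abs_mul, abs_of_pos (zero_lt_one.trans_le hΛ)]

theorem sq_le_norm_sq_smul_Pos_sub_Pos_zero {M r Λ ρ k : ℝ} (hM : ∀ y, ‖y‖ ≤ r → |u y| ≤ M)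
    (hΛ : 0 ≤ Λ) (hρ0 : 0 ≤ ρ) (hρ : ρ ≤ Λ * r) (hk : Λ * M + ρ ≤ |k|) (y : E n) :
    ρ ^ 2 ≤ ‖Λ • Pos u y - Pos (fun _ => k) 0‖ ^ 2 := by
  rw [norm_sq_smul_Pos_sub_Pos_zero]
  rcases le_or_gt ‖y‖ r with hy | hy
  · have hvert : ρ ≤ |Λ * u y - k| := by
      have hΛu : |Λ * u y| ≤ Λ * M := by
        rw [abs_mul, abs_of_nonneg hΛ]
        exact mul_le_mul_of_nonneg_left (hM y hy) hΛ
      linarith [abs_sub_abs_le_abs_sub k (Λ * u y), abs_sub_comm k (Λ * u y)]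
    linarith [pow_le_pow_left₀ hρ0 hvert 2, sq_abs (Λ * u y - k), sq_nonneg (Λ * ‖y‖)]
  · have hhor : ρ ≤ Λ * ‖y‖ := hρ.trans (mul_le_mul_of_nonneg_left hy.le hΛ)
    linarith [pow_le_pow_left₀ hρ0 hhor 2, sq_nonneg (Λ * u y - k)]

theorem ShrinkerEq.abs_le_mul_add_of_norm_sq_lt (hshr : ShrinkerEq u) (hu : ContDiff ℝ 2 u)
    {M r Λ ρ : ℝ} (hM : ∀ y, ‖y‖ ≤ r → |u y| ≤ M) (hΛ : 1 ≤ Λ) (hρ0 : 0 ≤ ρ) (hρ : ρ ≤ Λ * r)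
    {x : E n} (hx : ‖x‖ ^ 2 + 2 * n * (Λ ^ 2 - 1) < ρ ^ 2) : |u x| ≤ Λ * M + ρ := by
  by_contra! hlt
  have hΛ0 : 0 < Λ := zero_lt_one.trans_le hΛ
  have hΛsq : 0 ≤ 2 * n * (Λ ^ 2 - 1) :=
    mul_nonneg (by positivity) (sub_nonneg.2 (one_le_pow₀ hΛ))
  have hxr : ‖Λ⁻¹ • x‖ ≤ r := by
    have hxρ : ‖x‖ ≤ ρ := le_of_sq_le_sq (by linarith) hρ0
    rw [norm_smul, norm_inv, Real.norm_of_nonneg hΛ0.le, inv_mul_le_iff₀ hΛ0]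
    exact hxρ.trans hρ
  have hstart : Λ * |u (Λ⁻¹ • x)| ≤ Λ * M + ρ :=
    (mul_le_mul_of_nonneg_left (hM _ hxr) hΛ0.le).trans (le_add_of_nonneg_right hρ0)
  obtain ⟨l, hl, hlk⟩ := exists_abs_mul_apply_inv_smul_eq hu.continuous hΛ hstart hlt.le
  have hl0 : 0 < l := zero_lt_one.trans_le hl.1
  set k := l * u (l⁻¹ • x) with hk
  have havoid := hshr.sphere_avoidance hu hl0 hl.2
    (sq_le_norm_sq_smul_Pos_sub_Pos_zero hM hΛ0.le hρ0 hρ hlk.ge) (l⁻¹ • x)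
  rw [norm_sq_smul_Pos_sub_Pos_zero, ← hk, sub_self, norm_smul, norm_inv,
    Real.norm_of_nonneg hl0.le, mul_inv_cancel_left₀ hl0.ne'] at havoid
  have hlsq : 2 * n * (Λ ^ 2 - l ^ 2) ≤ 2 * n * (Λ ^ 2 - 1) := by
    gcongr
    exact one_le_pow₀ hl.1
  linarith

theorem sqrt_mul_le_sqrt_mul_two_mul_sqrt {a : ℝ} (ha : 1 ≤ a) (R : ℝ) :
    √(2 * a + 2) * R ≤ √(R ^ 2 + 1) * (2 * √a) := by
  refine le_of_sq_le_sq ?_ (by positivity)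
  rw [mul_pow, mul_pow, mul_pow, Real.sq_sqrt (by positivity), Real.sq_sqrt (by positivity),
    Real.sq_sqrt (by positivity)]
  linarith [mul_le_mul_of_nonneg_right ha (sq_nonneg R)]

theorem sqrt_mul_add_sqrt_mul_le {a M R : ℝ} (ha : 0 ≤ a) (hM : 0 ≤ M) (hR : 1 ≤ R) :
    √(R ^ 2 + 1) * M + √(2 * a + 2) * R ≤ 2 * (M + √(2 * a + 1)) * R := by
  have hΛ : √(R ^ 2 + 1) ≤ 2 * R :=
    Real.sqrt_le_iff.2 ⟨by linarith, by linarith [one_le_pow₀ hR (n := 2)]⟩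
  have hρ : √(2 * a + 2) ≤ 2 * √(2 * a + 1) := by
    refine Real.sqrt_le_iff.2 ⟨by positivity, ?_⟩
    rw [mul_pow, Real.sq_sqrt (by positivity)]
    linarith
  calc √(R ^ 2 + 1) * M + √(2 * a + 2) * R ≤ 2 * R * M + 2 * √(2 * a + 1) * R := by gcongr
    _ = 2 * (M + √(2 * a + 1)) * R := by ring

theorem ShrinkerEq.abs_le_supBall_add_mul (hshr : ShrinkerEq u) (hu : ContDiff ℝ 2 u)
    (hn : 1 ≤ n) {R : ℝ} (hR : 1 ≤ R) {x : E n} (hx : ‖x‖ ≤ R) :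
    |u x| ≤ 2 * (supBall u (2 * √n) + √(2 * n + 1)) * R := by
  have hn' : (1 : ℝ) ≤ n := mod_cast hn
  have hΛ : 1 ≤ √(R ^ 2 + 1) := Real.one_le_sqrt.2 (by linarith [sq_nonneg R])
  have hR0 : 0 < R := zero_lt_one.trans_le hR
  have hx2 : ‖x‖ ^ 2 + 2 * n * (√(R ^ 2 + 1) ^ 2 - 1) < (√(2 * n + 2) * R) ^ 2 := by
    rw [mul_pow, Real.sq_sqrt (by positivity), Real.sq_sqrt (by positivity)]
    linarith [pow_le_pow_left₀ (norm_nonneg x) hx 2, pow_pos hR0 2]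
  exact (hshr.abs_le_mul_add_of_norm_sq_lt hu (fun y hy => abs_le_supBall hu.continuous hy) hΛ
    (by positivity) (sqrt_mul_le_sqrt_mul_two_mul_sqrt hn' R) hx2).trans
    (sqrt_mul_add_sqrt_mul_le n.cast_nonneg (supBall_nonneg _ _) hR)

end GrowthBound

theorem stmt_10_general (n : ℕ) (u : E n → ℝ) (hu : ContDiff ℝ 2 u) (hshr : ShrinkerEq u) :
    ∃ C₁ : ℝ, C₁ = 2 * (supBall u (2 * Real.sqrt n) + Real.sqrt (2 * n + 1)) ∧
      0 < C₁ ∧ ∀ R > (1 : ℝ), ∀ x : E n, ‖x‖ ≤ R → |u x| ≤ C₁ * R := by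
  have hM : 0 ≤ supBall u (2 * √n) := supBall_nonneg u _
  refine ⟨_, rfl, by positivity, fun R hR x hx => ?_⟩
  rcases Nat.eq_zero_or_pos n with rfl | hn
  · have hx0 : ‖x‖ ≤ 2 * √(0 : ℕ) := by simp [Subsingleton.elim x 0]
    calc |u x| ≤ supBall u (2 * √(0 : ℕ)) := abs_le_supBall hu.continuous hx0
      _ ≤ 2 * (supBall u (2 * √(0 : ℕ)) + √(2 * (0 : ℕ) + 1)) := by
        linarith [Real.sqrt_nonneg (2 * (0 : ℕ) + 1)]
      _ ≤ 2 * (supBall u (2 * √(0 : ℕ)) + √(2 * (0 : ℕ) + 1)) * R :=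
        le_mul_of_one_le_right (by positivity) hR.le
  · exact hshr.abs_le_supBall_add_mul hu hn hR.le hx

/-- linear growth bound: `sup_{|x|≤R} |u| ≤ C₁ R` for all `R > 1`,
with `C₁ = 2(sup_{|x|≤2√n}|u| + √(2n+1))`. -/
theorem stmt_10 (n : ℕ) (u : E n → ℝ) (hu : ContDiff ℝ (⊤ : ℕ∞) u) (hshr : ShrinkerEq u) :
    ∃ C₁ : ℝ, C₁ = 2 * (supBall u (2 * Real.sqrt n) + Real.sqrt (2 * n + 1)) ∧
      0 < C₁ ∧ ∀ R > (1 : ℝ), ∀ x : E n, ‖x‖ ≤ R → |u x| ≤ C₁ * R := by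
  exact stmt_10_general n u (hu.of_le (WithTop.coe_le_coe.2 le_top)) hshr
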